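/- For every (θ, λ) ∈ [0, 2π] × [0, 1] there exist constants M > 0 and ρ with 0 < ρ ≤ 1 such that for all n ∈ ℕ the operator norm of the n-th power satisfies ‖G(θ,λ)ⁿ‖ ≤ M·ρⁿ. Moreover, if 0 < θ < 2π and 0 < λ < 1, then ρ can be taken strictly less than 1. -/

import Mathlib

/-- The matrix `A(λ)` of the CIP one-step map. -/
def cipA (l : ℝ) : Matrix (Fin 2) (Fin 2) ℝ :=
  !![(1 - l)^2 * (1 + 2*l), -((1 - l)^2 * l);
     6 * l * (1 - l), (1 - l) * (1 - 3*l)]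

/-- The matrix `B(λ)` of the CIP one-step map. -/
def cipB (l : ℝ) : Matrix (Fin 2) (Fin 2) ℝ :=
  !![l^2 * (3 - 2*l), l^2 * (1 - l);
     -(6 * l * (1 - l)), (3*l - 2) * l]

/-- The CIP amplification matrix `G(θ,λ) = A(λ) + e^{−iθ} B(λ)`. -/
noncomputable def cipG (θ l : ℝ) : Matrix (Fin 2) (Fin 2) ℂ :=
  (cipA l).map (fun x => (x : ℂ)) +
    Complex.exp (-(Complex.I * θ)) • (cipB l).map (fun x => (x : ℂ))

section Energy

variable {R : Type*} [CommRing R]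

/-- Jump at a node of the second derivative of the cubic Hermite spline with nodal value `f` and
slope `g` there, whose data are multiplied by `w'` (resp. `w`) at the next (resp. previous)
node. -/
def hermiteJumpTwo (w w' f g : R) : R :=
  6 * (w' - w) * f - (8 + 2 * (w + w')) * g

/-- Jump at a node of the third derivative of the spline of `hermiteJumpTwo`. -/
def hermiteJumpThree (w w' f g : R) : R :=
  12 * (2 - w - w') * f + 6 * (w' - w) * g

/-- Bending energy per cell of the spline of `hermiteJumpTwo`; `f'` and `g'` stand for the
conjugates of `f` and `g`. -/
def hermiteEnergy (w w' f g f' g' : R) : R :=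
  hermiteJumpThree w w' f g * f' - hermiteJumpTwo w w' f g * g'

theorem hermiteEnergy_sub_eq_dissipation {l w w' f f' g g' p p' q q' : R} (h : w * w' = 1)
    (hp : p = ((1 - l)^2 * (1 + 2*l) + w * (l^2 * (3 - 2*l))) * f
      + (-((1 - l)^2 * l) + w * (l^2 * (1 - l))) * g)
    (hq : q = (6 * l * (1 - l) + w * -(6 * l * (1 - l))) * f
      + ((1 - l) * (1 - 3*l) + w * ((3*l - 2) * l)) * g)
    (hp' : p' = ((1 - l)^2 * (1 + 2*l) + w' * (l^2 * (3 - 2*l))) * f'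
      + (-((1 - l)^2 * l) + w' * (l^2 * (1 - l))) * g')
    (hq' : q' = (6 * l * (1 - l) + w' * -(6 * l * (1 - l))) * f'
      + ((1 - l) * (1 - 3*l) + w' * ((3*l - 2) * l)) * g') :
    12 * (hermiteEnergy w w' f g f' g' - hermiteEnergy w w' p q p' q') =
      l * (1 - l) *
        ((2 * (l * (1 - l)) * hermiteJumpThree w w' f g
            + 3 * (2 * l - 1) * hermiteJumpTwo w w' f g)
          * (2 * (l * (1 - l)) * hermiteJumpThree w' w f' g'
            + 3 * (2 * l - 1) * hermiteJumpTwo w' w f' g')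
        + 3 * (hermiteJumpTwo w w' f g * hermiteJumpTwo w' w f' g')) := by
  subst hp hq hp' hq'
  simp only [hermiteEnergy, hermiteJumpTwo, hermiteJumpThree]
  grind

theorem mul_hermiteEnergy_eq {w w' : R} (f g f' g' : R) (h : w * w' = 1) :
    (8 + 2 * (w + w')) * hermiteEnergy w w' f g f' g' =
      hermiteJumpTwo w w' f g * hermiteJumpTwo w' w f' g' + 12 * (2 - w - w')^2 * (f * f') := by
  simp only [hermiteEnergy, hermiteJumpTwo, hermiteJumpThree]
  grind

end Energy

open Complex ComplexConjugate

theorem conj_hermiteJumpTwo (w f g : ℂ) :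
    conj (hermiteJumpTwo w (conj w) f g) = hermiteJumpTwo (conj w) w (conj f) (conj g) := by
  simp [hermiteJumpTwo, map_ofNat]

theorem conj_hermiteJumpThree (w f g : ℂ) :
    conj (hermiteJumpThree w (conj w) f g) = hermiteJumpThree (conj w) w (conj f) (conj g) := by
  simp [hermiteJumpThree, map_ofNat]

theorem norm_lt_one_of_cip_eigenvector {l : ℝ} (hl0 : 0 < l) (hl1 : l < 1) {w k f g : ℂ}
    (hw : ‖w‖ = 1) (hw1 : w.re < 1) (hv : f ≠ 0 ∨ g ≠ 0)
    (hf : k * f = ((1 - l)^2 * (1 + 2*l) + w * (l^2 * (3 - 2*l))) * f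
      + (-((1 - l)^2 * l) + w * (l^2 * (1 - l))) * g)
    (hg : k * g = (6 * l * (1 - l) + w * -(6 * l * (1 - l))) * f
      + ((1 - l) * (1 - 3*l) + w * ((3*l - 2) * l)) * g) :
    ‖k‖ < 1 := by
  have hww : w * conj w = 1 := by simp [mul_conj, normSq_eq_norm_sq, hw]
  have hadd : w + conj w = (2 * w.re : ℝ) := add_conj w
  have hre : -1 ≤ w.re := by linarith [neg_abs_le w.re, abs_re_le_norm w]
  set j := hermiteJumpTwo w (conj w) f g with hj
  set t := hermiteJumpThree w (conj w) f g with ht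
  set x := 2 * ((l : ℂ) * (1 - l)) * t + 3 * (2 * l - 1) * j with hx
  have hm : 0 < l * (1 - l) := mul_pos hl0 (by linarith)
  have hmul := mul_hermiteEnergy_eq f g (conj f) (conj g) hww
  have hdiss := hermiteEnergy_sub_eq_dissipation (l := (l : ℂ)) hww hf hg
    (p' := conj k * conj f) (q' := conj k * conj g)
    (by simpa [map_ofNat] using congrArg conj hf) (by simpa [map_ofNat] using congrArg conj hg)
  have hscale : hermiteEnergy w (conj w) (k * f) (k * g) (conj k * conj f) (conj k * conj g)
      = (k * conj k) * hermiteEnergy w (conj w) f g (conj f) (conj g) := by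
    simp only [hermiteEnergy, hermiteJumpTwo, hermiteJumpThree]; ring
  have hxc : conj x = 2 * ((l : ℂ) * (1 - l)) * hermiteJumpThree (conj w) w (conj f) (conj g)
      + 3 * (2 * l - 1) * hermiteJumpTwo (conj w) w (conj f) (conj g) := by
    rw [← conj_hermiteJumpTwo, ← conj_hermiteJumpThree, ← hj, ← ht, hx]
    simp [map_ofNat]
  rw [hscale, ← hj, ← ht, ← hx, ← hxc, ← conj_hermiteJumpTwo, ← hj, mul_conj, mul_conj,
    mul_conj] at hdiss
  rw [← conj_hermiteJumpTwo, ← hj, mul_conj, mul_conj, hadd] at hmul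
  have hsub : 2 - w - conj w = (2 - 2 * w.re : ℝ) := by
    push_cast at hadd ⊢; linear_combination -hadd
  rw [hsub] at hmul
  set P : ℝ := normSq j + 12 * (2 - 2 * w.re)^2 * normSq f with hP
  have hbal : 12 * P * (1 - normSq k) =
      (8 + 4 * w.re) * (l * (1 - l) * (normSq x + 3 * normSq j)) := by
    have : ((12 * P * (1 - normSq k) : ℝ) : ℂ) =
        ((8 + 4 * w.re) * (l * (1 - l) * (normSq x + 3 * normSq j)) : ℝ) := by
      rw [hP]
      push_cast at hmul ⊢
      linear_combination (8 + 4 * (w.re : ℂ)) * hdiss - 12 * (1 - (normSq k : ℂ)) * hmul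
    exact_mod_cast this
  have hd : 0 < 12 * (2 - 2 * w.re)^2 := by
    have : 0 < 2 - 2 * w.re := by linarith
    positivity
  have hPpos : 0 < P := by
    rcases eq_or_ne f 0 with rfl | h0
    · have hg0 : g ≠ 0 := by simpa using hv
      have hj0 : j ≠ 0 := by
        have hc : ((8 + 4 * w.re : ℝ) : ℂ) ≠ 0 := by
          exact_mod_cast (by linarith : 0 < 8 + 4 * w.re).ne'
        have : j = -((8 + 4 * w.re : ℝ) : ℂ) * g := by
          rw [hj, hermiteJumpTwo, hadd]; push_cast; ring
        rw [this]
        exact mul_ne_zero (neg_ne_zero.2 hc) hg0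
      have := normSq_pos.2 hj0
      simpa [hP] using this
    · have := mul_pos hd (normSq_pos.2 h0)
      have := normSq_nonneg j
      linarith
  have hQpos : 0 < normSq x + 3 * normSq j := by
    by_contra! hQ
    have hj0 : j = 0 := normSq_eq_zero.1 (by linarith [normSq_nonneg x, normSq_nonneg j])
    have hx0 : x = 0 := normSq_eq_zero.1 (by linarith [normSq_nonneg x, normSq_nonneg j])
    have ht0 : t = 0 := by
      have hmc : (l : ℂ) * (1 - l) ≠ 0 := by exact_mod_cast hm.ne'
      rw [hj0, mul_zero, add_zero] at hx
      simpa [hx0, hmc] using hx.symm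
    have hE : hermiteEnergy w (conj w) f g (conj f) (conj g) = 0 := by
      rw [hermiteEnergy, ← hj, ← ht, hj0, ht0]; ring
    rw [hE, mul_zero] at hmul
    exact hPpos.ne (by rw [hP]; exact_mod_cast hmul)
  have hk : normSq k < 1 := by
    have h1 : 0 < (8 + 4 * w.re) * (l * (1 - l) * (normSq x + 3 * normSq j)) :=
      mul_pos (by linarith) (mul_pos hm hQpos)
    rw [← hbal] at h1
    linarith [pos_of_mul_pos_right h1 (by positivity)]
  rw [normSq_eq_norm_sq] at hk
  exact (sq_lt_one_iff₀ (norm_nonneg k)).1 hk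

theorem norm_lt_one_of_mem_spectrum_cipG {θ l : ℝ} (hθ : Real.cos θ < 1) (hl0 : 0 < l)
    (hl1 : l < 1) {k : ℂ} (hk : k ∈ spectrum ℂ (cipG θ l)) : ‖k‖ < 1 := by
  rw [spectrum.mem_iff, Matrix.isUnit_iff_isUnit_det, isUnit_iff_ne_zero, not_not,
    ← Matrix.exists_mulVec_eq_zero_iff] at hk
  obtain ⟨v, hv, hkv⟩ := hk
  rw [Matrix.sub_mulVec, sub_eq_zero] at hkv
  have h0 := congrFun hkv 0
  have h1 := congrFun hkv 1
  simp [cipG, cipA, cipB, Matrix.algebraMap_eq_diagonal, Matrix.mulVec,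
    dotProduct, Fin.sum_univ_two, Matrix.diagonal] at h0 h1
  have hexp : exp (-(I * θ)) = exp ((-θ : ℝ) * I) := by congr 1; push_cast; ring
  refine norm_lt_one_of_cip_eigenvector hl0 hl1 (w := exp (-(I * θ))) (f := v 0) (g := v 1)
    ?_ ?_ ?_ ?_ ?_
  · rw [hexp, norm_exp_ofReal_mul_I]
  · rwa [hexp, exp_ofReal_mul_I_re, Real.cos_neg]
  · by_contra! h
    exact hv (funext fun i => by fin_cases i <;> simp [h.1, h.2])
  · linear_combination h0
  · linear_combination h1

/-- In a complex Banach algebra, the powers of an element whose spectrum lies in the open unit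
disc decay geometrically. -/
theorem exists_norm_pow_le_of_spectrum_norm_lt_one {A : Type*} [NormedRing A]
    [NormedAlgebra ℂ A] [CompleteSpace A] [Nontrivial A] (a : A)
    (ha : ∀ z ∈ spectrum ℂ a, ‖z‖ < 1) :
    ∃ M ρ : ℝ, 0 < M ∧ 0 < ρ ∧ ρ < 1 ∧ ∀ n : ℕ, ‖a ^ n‖ ≤ M * ρ ^ n := by
  have hr : spectralRadius ℂ a < 1 := by
    exact_mod_cast spectrum.spectralRadius_lt_of_forall_lt a (r := 1) fun z hz => ha z hz
  obtain ⟨ρ, hρ, hρ1⟩ := ENNReal.lt_iff_exists_nnreal_btwn.1 hr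
  have hρ1 : ρ < 1 := by exact_mod_cast hρ1
  have hρ0 : 0 < ρ := ENNReal.coe_pos.1 (bot_le.trans_lt hρ)
  have hev := (spectrum.pow_nnnorm_pow_one_div_tendsto_nhds_spectralRadius a).eventually_lt_const hρ
  obtain ⟨N, hN⟩ := Filter.eventually_atTop.1 (hev.and (Filter.eventually_gt_atTop 0))
  have hρ0' : (0 : ℝ) < ρ := hρ0
  refine ⟨1 + ∑ i ∈ Finset.range N, ‖a ^ i‖ / ρ ^ i, ρ, ?_, hρ0, hρ1, fun n => ?_⟩
  · positivity
  rw [add_mul, one_mul]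
  have hS : 0 ≤ ∑ i ∈ Finset.range N, ‖a ^ i‖ / (ρ : ℝ) ^ i := by positivity
  rcases lt_or_ge n N with hn | hn
  · have h1 := Finset.single_le_sum (f := fun i => ‖a ^ i‖ / (ρ : ℝ) ^ i)
      (fun i _ => by positivity) (Finset.mem_range.2 hn)
    have h2 := (div_le_iff₀ (by positivity)).1 h1
    have h3 : (0 : ℝ) < ρ ^ n := by positivity
    linarith
  · obtain ⟨h1, h2⟩ := hN n hn
    have hn0 : (0 : ℝ) < n := by exact_mod_cast h2
    rw [one_div, ENNReal.rpow_inv_lt_iff hn0] at h1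
    have h3 : ‖a ^ n‖₊ ≤ ρ ^ n := by
      have := h1.le
      simp only [ENNReal.rpow_natCast] at this
      exact_mod_cast this
    have h4 : ‖a ^ n‖ ≤ (ρ : ℝ) ^ n := by exact_mod_cast h3
    have : 0 ≤ (∑ i ∈ Finset.range N, ‖a ^ i‖ / (ρ : ℝ) ^ i) * (ρ : ℝ) ^ n := by positivity
    linarith

/-- Spectral decomposition of the powers of the amplification matrix at zero frequency. -/
theorem cipG_pow_of_exp_eq_one {θ l : ℝ} (h : exp (-(I * θ)) = 1) (n : ℕ) :
    cipG θ l ^ n = !![1, (2 * (l : ℂ) - 1) / 6; 0, 0]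
      + (1 - 6 * (l : ℂ) * (1 - l)) ^ n • !![0, (1 - 2 * (l : ℂ)) / 6; 0, 1] := by
  induction n with
  | zero =>
    ext i j
    fin_cases i <;> fin_cases j <;> simp
    ring
  | succ n ih =>
    rw [pow_succ, ih, cipG, h]
    ext i j
    fin_cases i <;> fin_cases j <;>
      simp [cipA, cipB, Matrix.mul_apply, Fin.sum_univ_two, pow_succ, -mul_eq_mul_left_iff] <;> ring

theorem exists_norm_cipG_pow_le_of_exp_eq_one {θ l : ℝ} (h : exp (-(I * θ)) = 1)
    (hl : l ∈ Set.Icc (0 : ℝ) 1) :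
    ∃ M : ℝ, 0 < M ∧ ∀ n : ℕ, ‖Matrix.toEuclideanCLM (𝕜 := ℂ) (cipG θ l ^ n)‖ ≤ M := by
  have hq : ‖1 - 6 * (l : ℂ) * (1 - l)‖ ≤ 1 := by
    have : 1 - 6 * (l : ℂ) * (1 - l) = (1 - 6 * l * (1 - l) : ℝ) := by push_cast; ring
    rw [this, norm_real, Real.norm_eq_abs, abs_le]
    constructor <;> nlinarith [hl.1, hl.2, sq_nonneg (2 * l - 1)]
  refine ⟨1 + ‖Matrix.toEuclideanCLM (𝕜 := ℂ) !![1, (2 * (l : ℂ) - 1) / 6; 0, 0]‖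
    + ‖Matrix.toEuclideanCLM (𝕜 := ℂ) !![0, (1 - 2 * (l : ℂ)) / 6; 0, 1]‖, by positivity,
    fun n => ?_⟩
  rw [cipG_pow_of_exp_eq_one h, map_add, map_smul]
  refine (norm_add_le _ _).trans (add_le_add (by linarith) ?_)
  rw [norm_smul, norm_pow]
  exact mul_le_of_le_one_left (norm_nonneg _) (pow_le_one₀ (norm_nonneg _) hq)

theorem cipG_zero (θ : ℝ) : cipG θ 0 = 1 := by
  ext i j
  fin_cases i <;> fin_cases j <;> simp [cipG, cipA, cipB]

theorem cipG_one (θ : ℝ) : cipG θ 1 = exp (-(I * θ)) • 1 := by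
  ext i j
  fin_cases i <;> fin_cases j <;> norm_num [cipG, cipA, cipB]

/-- **Conditional stability.** For every `(θ,λ) ∈ [0,2π] × [0,1]` there
are constants `M > 0` and `0 < ρ ≤ 1` with `‖G(θ,λ)ⁿ‖ ≤ M ρⁿ` for all `n` (operator norm
induced by the Euclidean norm on `ℂ²`); moreover for `0 < θ < 2π`, `0 < λ < 1` one can
take `ρ < 1`. -/
theorem stmt_6 (θ lam : ℝ) (hθ : θ ∈ Set.Icc 0 (2 * Real.pi))
    (hlam : lam ∈ Set.Icc (0:ℝ) 1) :
    ∃ M ρ : ℝ, 0 < M ∧ 0 < ρ ∧ ρ ≤ 1 ∧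
      (∀ n : ℕ, ‖Matrix.toEuclideanCLM (𝕜 := ℂ) ((cipG θ lam) ^ n)‖ ≤ M * ρ ^ n) ∧
      ((0 < θ ∧ θ < 2 * Real.pi ∧ 0 < lam ∧ lam < 1) → ρ < 1) := by
  by_cases hw : exp (-(I * θ)) = 1
  · obtain ⟨M, hM, hbound⟩ := exists_norm_cipG_pow_le_of_exp_eq_one hw hlam
    refine ⟨M, 1, hM, one_pos, le_rfl, fun n => by simpa using hbound n, ?_⟩
    rintro ⟨h0, h1, -, -⟩
    have hre := congrArg re hw
    simp only [exp_re, neg_re, neg_im, mul_re, mul_im, I_re, I_im, ofReal_re, ofReal_im] at hre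
    norm_num at hre
    exact absurd ((Real.cos_eq_one_iff_of_lt_of_lt (by linarith) h1).1 hre) h0.ne'
  rcases hlam.1.eq_or_lt with rfl | hl0
  · exact ⟨1, 1, one_pos, one_pos, le_rfl, fun n => by simp [cipG_zero], fun h => by simp at h⟩
  rcases hlam.2.eq_or_lt with rfl | hl1
  · refine ⟨1, 1, one_pos, one_pos, le_rfl, fun n => ?_, fun h => by simp at h⟩
    simp [cipG_one, smul_pow, norm_smul, norm_exp]
  have hcos : Real.cos θ < 1 := (Real.cos_le_one θ).lt_of_ne fun h => hw <| by
    have hsin : Real.sin θ = 0 := by nlinarith [Real.sin_sq_add_cos_sq θ]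
    apply Complex.ext <;> simp [exp_re, exp_im, h, hsin]
  obtain ⟨M, ρ, hM, hρ0, hρ1, hbound⟩ := exists_norm_pow_le_of_spectrum_norm_lt_one
    (Matrix.toEuclideanCLM (𝕜 := ℂ) (cipG θ lam)) fun z hz =>
      norm_lt_one_of_mem_spectrum_cipG hcos hl0 hl1 (by rwa [AlgEquiv.spectrum_eq] at hz)
  exact ⟨M, ρ, hM, hρ0, hρ1.le, fun n => by simpa only [map_pow] using hbound n, fun _ => hρ1⟩
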